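/- There exists a universal constant C such that for all integers n ≥ 2 and m > n there is a deterministic algorithm A mapping cost profiles to allocations which is (i) ordinal: if two profiles induce, for every agent, the same weak order of the items by cost, then A outputs the same allocation; (ii) strategyproof: for every agent i, profile c, and report c'_i, c_i(A(c)_i) ≤ c_i(A(c'_i, c_{−i})_i); and (iii) C·(1 + log₂(m/n))-approximately MMS fair: for every profile, every agent i receives a bundle X_i with c_i(X_i) ≤ C·(1 + log₂(m/n))·MMS_i. -/

import Mathlib

/-- The maxmin share of an agent with cost vector `c` over `m` items,
with respect to partitions into `n` (possibly empty) bundles. -/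
noncomputable def MMS (n m : ℕ) (c : Fin m → ℝ) : ℝ :=
  ⨅ P : Fin m → Fin n, ⨆ k : Fin n, ∑ j ∈ Finset.univ.filter (fun j => P j = k), c j

/-!
Write `L = 1 + log₂ (m / n)`. The agents come one after the other, and an agent who finds `R`
items left takes the `⌊L * (2 + R / n)⌋` cheapest of them in her own order. What an agent reports
affects neither the set of items she chooses from nor the number she takes, so truthful reporting
is optimal.

Each round shrinks `R + n` by a factor of at least `2 ^ (L / n)`, unless it leaves nothing. Items
left after `n` rounds would therefore give `R + n ≤ (m + n) * 2 ^ (-L) ≤ n`, so none are left.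

A bundle of `a` items, the cheapest of `R`, costs at most `a * MMS`, because one item costs at most
`MMS`, and at most `(a / R) * (n * MMS)`, because all items together cost at most `n * MMS`. Hence
`2 + R / n` times its cost is at most `3 * a * MMS`, where `a ≤ L * (2 + R / n)`.
-/

open Finset

section MaxminShare

variable {n m : ℕ} [NeZero n] {c : Fin m → ℝ}

lemma le_MMS_of_forall_partition {b : ℝ}
    (h : ∀ P : Fin m → Fin n, ∃ k, b ≤ ∑ j with P j = k, c j) : b ≤ MMS n m c :=
  le_ciInf fun P =>
    let ⟨k, hk⟩ := h P
    hk.trans (le_ciSup (f := fun k => ∑ j with P j = k, c j) (Set.finite_range _).bddAbove k)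

lemma cost_le_MMS (hc : ∀ j, 0 ≤ c j) (j : Fin m) : c j ≤ MMS n m c :=
  le_MMS_of_forall_partition fun P =>
    ⟨P j, single_le_sum (fun i _ => hc i) (mem_filter_univ j |>.2 rfl)⟩

lemma MMS_nonneg (hc : ∀ j, 0 ≤ c j) : 0 ≤ MMS n m c :=
  le_MMS_of_forall_partition fun _ => ⟨0, sum_nonneg fun j _ => hc j⟩

lemma sum_cost_le_mul_MMS : ∑ j, c j ≤ n * MMS n m c := by
  have hn : (0 : ℝ) < n := Nat.cast_pos.2 (NeZero.pos n)
  rw [← div_le_iff₀' hn]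
  refine le_MMS_of_forall_partition fun P => Fintype.exists_le_sum_fiber_of_nsmul_le_sum P ?_
  rw [Fintype.card_fin, nsmul_eq_mul, mul_div_cancel₀ _ hn.ne']

end MaxminShare

section Cheapest

variable {α β : Type*}

/-- `K` consists of `k` elements of `S` of least cost, or of all of `S` if it has fewer than `k`. -/
structure IsCheapest [LE β] (c : α → β) (S : Finset α) (k : ℕ) (K : Finset α) : Prop where
  subset : K ⊆ S
  card_eq : #K = min k #S
  le : ∀ x ∈ K, ∀ y ∈ S, y ∉ K → c x ≤ c y

lemma exists_isCheapest [LinearOrder β] (c : α → β) (S : Finset α) (k : ℕ) :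
    ∃ K, IsCheapest c S k K := by
  classical
  induction S using Finset.induction_on_max_value c with
  | empty => exact ⟨∅, Subset.rfl, by simp, by simp⟩
  | insert a S ha hmax ih =>
    have hcard := card_insert_of_notMem ha
    rcases le_or_gt k #S with hk | hk
    · obtain ⟨K, hKS, hK, hle⟩ := ih
      refine ⟨K, hKS.trans (subset_insert a S), by omega, fun x hx y hy hyK => ?_⟩
      rcases mem_insert.1 hy with rfl | hy
      · exact hmax x (hKS hx)
      · exact hle x hx y hy hyK
    · exact ⟨insert a S, Subset.rfl, by omega, fun _ _ y hy hy' => absurd hy hy'⟩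

lemma IsCheapest.of_le_imp_le {γ : Type*} [LE β] [LE γ] {c : α → β} {c' : α → γ} {S K : Finset α}
    {k : ℕ} (h : ∀ x y, c x ≤ c y → c' x ≤ c' y) (hK : IsCheapest c S k K) :
    IsCheapest c' S k K :=
  ⟨hK.subset, hK.card_eq, fun x hx y hy hyK => h x y (hK.le x hx y hy hyK)⟩

/-- A choice of `k` elements of `S` of least cost. Ties are broken by a choice that sees only the
predicate `IsCheapest c S k`, hence only the weak order induced by `c`. -/
noncomputable def cheapest [LinearOrder β] (c : α → β) (S : Finset α) (k : ℕ) : Finset α :=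
  (exists_isCheapest c S k).choose

lemma isCheapest_cheapest [LinearOrder β] (c : α → β) (S : Finset α) (k : ℕ) :
    IsCheapest c S k (cheapest c S k) :=
  (exists_isCheapest c S k).choose_spec

lemma cheapest_congr [LinearOrder β] {c c' : α → β} (h : ∀ x y, c x ≤ c y ↔ c' x ≤ c' y)
    (S : Finset α) (k : ℕ) : cheapest c S k = cheapest c' S k := by
  have hpred : IsCheapest c S k = IsCheapest c' S k :=
    funext fun K => propext
      ⟨.of_le_imp_le fun x y => (h x y).1, .of_le_imp_le fun x y => (h x y).2⟩
  simp only [cheapest, hpred]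

lemma card_nsmul_sum_le_card_nsmul_sum [AddCommMonoid β] [Preorder β] [AddLeftMono β]
    {c : α → β} {A B : Finset α} (h : ∀ x ∈ A, ∀ y ∈ B, c x ≤ c y) :
    #B • ∑ x ∈ A, c x ≤ #A • ∑ y ∈ B, c y := by
  calc #B • ∑ x ∈ A, c x = ∑ x ∈ A, ∑ _y ∈ B, c x := by simp only [sum_const, sum_nsmul]
    _ ≤ ∑ _x ∈ A, ∑ y ∈ B, c y := sum_le_sum fun x hx => sum_le_sum fun y hy => h x hx y hy
    _ = #A • ∑ y ∈ B, c y := sum_const _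

namespace IsCheapest

variable {c : α → β} {S K K' : Finset α} {k : ℕ}

lemma sum_le_sum_of_card_eq [AddCommMonoid β] [LinearOrder β] [IsOrderedCancelAddMonoid β]
    (hK : IsCheapest c S k K) (hsub : K' ⊆ S) (hcard : #K' = #K) :
    ∑ x ∈ K, c x ≤ ∑ x ∈ K', c x := by
  classical
  rw [← sum_sdiff_le_sum_sdiff]
  have hexchange : #(K' \ K) • ∑ x ∈ K \ K', c x ≤ #(K \ K') • ∑ x ∈ K' \ K, c x :=
    card_nsmul_sum_le_card_nsmul_sum fun x hx y hy =>
      hK.le x (mem_sdiff.1 hx).1 y (hsub (mem_sdiff.1 hy).1) (mem_sdiff.1 hy).2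
  rw [card_sdiff_comm hcard] at hexchange
  rcases Nat.eq_zero_or_pos #(K \ K') with h0 | hpos
  · rw [card_eq_zero.1 h0, card_eq_zero.1 ((card_sdiff_comm hcard).trans h0)]
  · exact le_of_nsmul_le_nsmul_right hpos.ne' hexchange

lemma card_nsmul_sum_le [AddCommMonoid β] [PartialOrder β] [IsOrderedAddMonoid β]
    (hK : IsCheapest c S k K) : #S • ∑ x ∈ K, c x ≤ #K • ∑ x ∈ S, c x := by
  classical
  have hrest : #(S \ K) • ∑ x ∈ K, c x ≤ #K • ∑ x ∈ S \ K, c x :=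
    card_nsmul_sum_le_card_nsmul_sum fun x hx y hy =>
      hK.le x hx y (mem_sdiff.1 hy).1 (mem_sdiff.1 hy).2
  rw [← sum_sdiff hK.subset, ← card_sdiff_add_card_eq_card hK.subset, add_nsmul, nsmul_add]
  gcongr

end IsCheapest

end Cheapest

section SequentialPicking

variable {α β : Type*} [Fintype α] [DecidableEq α] [LinearOrder β] {n : ℕ}

/-- If every agent who finds `R` items left takes `q R` of them, or all if there are fewer, then `n`
agents take all of `m` items. -/
def Exhausts (q : ℕ → ℕ) (n m : ℕ) : Prop :=
  (fun R => R - q R)^[n] m = 0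

/-- The items left after the first `t` agents have picked, in a sequential picking procedure where
agent `i`, finding `R` items left, takes the `q R` cheapest of them with respect to `c i`. -/
noncomputable def remaining (q : ℕ → ℕ) (c : Fin n → α → β) (t : Fin (n + 1)) : Finset α :=
  Fin.induction (motive := fun _ => Finset α) univ (fun i S => S \ cheapest (c i) S (q #S)) t

/-- The items that agent `i` takes in the sequential picking procedure with quota `q`. -/
noncomputable def bundle (q : ℕ → ℕ) (c : Fin n → α → β) (i : Fin n) : Finset α :=
  cheapest (c i) (remaining q c i.castSucc) (q #(remaining q c i.castSucc))

variable {q : ℕ → ℕ} {c c' : Fin n → α → β}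

lemma remaining_succ (i : Fin n) :
    remaining q c i.succ = remaining q c i.castSucc \ bundle q c i :=
  rfl

lemma isCheapest_bundle (q : ℕ → ℕ) (c : Fin n → α → β) (i : Fin n) :
    IsCheapest (c i) (remaining q c i.castSucc) (q #(remaining q c i.castSucc)) (bundle q c i) :=
  isCheapest_cheapest _ _ _

lemma remaining_congr {t : Fin (n + 1)}
    (h : ∀ i : Fin n, i.castSucc < t → ∀ x y, c i x ≤ c i y ↔ c' i x ≤ c' i y) :
    remaining q c t = remaining q c' t := by
  induction t using Fin.induction with
  | zero => rfl
  | succ i ih =>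
    have hi : remaining q c i.castSucc = remaining q c' i.castSucc :=
      ih fun k hk => h k (hk.trans i.castSucc_lt_succ)
    rw [remaining_succ, remaining_succ, bundle, bundle, hi,
      cheapest_congr (h i i.castSucc_lt_succ)]

lemma bundle_congr (h : ∀ i x y, c i x ≤ c i y ↔ c' i x ≤ c' i y) : bundle q c = bundle q c' := by
  funext i
  rw [bundle, bundle, remaining_congr fun k _ => h k, cheapest_congr (h i)]

lemma remaining_update (i : Fin n) (b : α → β) :
    remaining q (Function.update c i b) i.castSucc = remaining q c i.castSucc :=
  remaining_congr fun k hk x y => by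
    rw [Function.update_of_ne (Fin.castSucc_lt_castSucc_iff.1 hk).ne]

lemma remaining_antitone : Antitone (remaining q c) :=
  Fin.antitone_iff_succ_le.2 fun i => (remaining_succ i).trans_subset sdiff_subset

lemma card_remaining (t : Fin (n + 1)) :
    #(remaining q c t) = (fun R => R - q R)^[t] (Fintype.card α) := by
  induction t using Fin.induction with
  | zero => exact card_univ
  | succ i ih =>
    have hbundle := isCheapest_bundle q c i
    rw [Fin.val_succ, Function.iterate_succ_apply', ← Fin.val_castSucc, ← ih, remaining_succ,
      card_sdiff_of_subset hbundle.subset, hbundle.card_eq]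
    omega

lemma mem_bundle_iff {i : Fin n} {j : α} :
    j ∈ bundle q c i ↔ j ∈ remaining q c i.castSucc ∧ j ∉ remaining q c i.succ := by
  have hsub : j ∈ bundle q c i → j ∈ remaining q c i.castSucc :=
    fun hj => (isCheapest_bundle q c i).subset hj
  rw [remaining_succ, mem_sdiff]
  tauto

lemma eq_of_mem_bundle {i k : Fin n} {j : α} (hi : j ∈ bundle q c i) (hk : j ∈ bundle q c k) :
    i = k := by
  wlog hlt : i < k generalizing i k
  · exact (not_lt.1 hlt).eq_or_lt.elim Eq.symm fun h => (this hk hi h).symm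
  · have hsub : remaining q c k.castSucc ⊆ remaining q c i.succ :=
      remaining_antitone (Fin.succ_le_castSucc_iff.2 hlt)
    exact absurd (hsub (mem_bundle_iff.1 hk).1) (mem_bundle_iff.1 hi).2

lemma exists_mem_bundle (hq : Exhausts q n (Fintype.card α))
    (c : Fin n → α → β) (j : α) : ∃ i, j ∈ bundle q c i := by
  by_contra! hj
  have hmem (t : Fin (n + 1)) : j ∈ remaining q c t := by
    induction t using Fin.induction with
    | zero => exact mem_univ j
    | succ i ih => exact mem_sdiff.2 ⟨ih, hj i⟩
  have hempty : remaining q c (Fin.last n) = ∅ := by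
    rw [← card_eq_zero, card_remaining, Fin.val_last, hq]
  exact notMem_empty j (hempty ▸ hmem (Fin.last n))

/-- The allocation produced by the sequential picking procedure with quota `q`. -/
noncomputable def sequentialPicking (hq : Exhausts q n (Fintype.card α))
    (c : Fin n → α → β) (j : α) : Fin n :=
  (exists_mem_bundle hq c j).choose

lemma sequentialPicking_eq_iff (hq : Exhausts q n (Fintype.card α))
    {i : Fin n} {j : α} : sequentialPicking hq c j = i ↔ j ∈ bundle q c i := by
  have hj : j ∈ bundle q c (sequentialPicking hq c j) := (exists_mem_bundle hq c j).choose_spec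
  exact ⟨fun h => h ▸ hj, fun h => eq_of_mem_bundle hj h⟩

lemma filter_sequentialPicking (hq : Exhausts q n (Fintype.card α))
    (c : Fin n → α → β) (i : Fin n) :
    ({j | sequentialPicking hq c j = i} : Finset α) = bundle q c i := by
  ext j
  rw [mem_filter_univ, sequentialPicking_eq_iff]

end SequentialPicking

section Mechanism

variable {ι α β : Type*}

/-- An allocation rule is ordinal if it depends only on the weak orders of the items that the
agents' costs induce. -/
def IsOrdinal [LE β] (A : (ι → α → β) → α → ι) : Prop :=
  ∀ c c' : ι → α → β, (∀ i j j', c i j ≤ c i j' ↔ c' i j ≤ c' i j') → A c = A c'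

/-- An allocation rule for chores is strategyproof if no agent can lower the cost of her bundle by
misreporting her costs. -/
def IsStrategyproof [Fintype α] [DecidableEq ι] [AddCommMonoid β] [LE β]
    (A : (ι → α → β) → α → ι) : Prop :=
  ∀ (c : ι → α → β) (i : ι) (b : α → β),
    ∑ j with A c j = i, c i j ≤ ∑ j with A (Function.update c i b) j = i, c i j

variable [Fintype α] [DecidableEq α] {n : ℕ} {q : ℕ → ℕ}

lemma isOrdinal_sequentialPicking [LinearOrder β]
    (hq : Exhausts q n (Fintype.card α)) :
    IsOrdinal (sequentialPicking (β := β) hq) := by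
  intro c c' h
  funext j
  rw [sequentialPicking_eq_iff, bundle_congr h, ← sequentialPicking_eq_iff hq]

lemma isStrategyproof_sequentialPicking [AddCommMonoid β] [LinearOrder β]
    [IsOrderedCancelAddMonoid β] (hq : Exhausts q n (Fintype.card α)) :
    IsStrategyproof (sequentialPicking (β := β) hq) := by
  intro c i b
  rw [filter_sequentialPicking, filter_sequentialPicking]
  have hlie := isCheapest_bundle q (Function.update c i b) i
  rw [remaining_update] at hlie
  have htruth := isCheapest_bundle q c i
  exact htruth.sum_le_sum_of_card_eq hlie.subset (hlie.card_eq.trans htruth.card_eq.symm)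

end Mechanism

section Quota

/-- The number of items that one of `n` agents takes when she finds `R` items left, where `L` stands
for `1 + log₂ (m / n)`. -/
noncomputable def logQuota (L : ℝ) (n R : ℕ) : ℕ :=
  ⌊L * (2 + R / n)⌋₊

lemma one_sub_le_two_rpow_neg {x : ℝ} (hx : 0 ≤ x) : 1 - x ≤ (2 : ℝ) ^ (-x) := by
  have hlog : Real.log 2 ≤ 1 := Real.log_two_lt_d9.le.trans (by norm_num)
  calc 1 - x ≤ Real.exp (-x) := Real.one_sub_le_exp_neg x
    _ ≤ Real.exp (Real.log 2 * -x) := Real.exp_le_exp.2 (by nlinarith)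
    _ = 2 ^ (-x) := (Real.rpow_def_of_pos two_pos _).symm

variable {n : ℕ} {L : ℝ}

lemma sub_logQuota_add_le (hn : 0 < n) (hL : 1 ≤ L) {R : ℕ} (hR : 0 < R - logQuota L n R) :
    ((R - logQuota L n R : ℕ) : ℝ) + n ≤ (R + n) * 2 ^ (-(L / n)) := by
  have : (0 : ℝ) < n := Nat.cast_pos.2 hn
  have hquota : L * (2 + R / n) - 1 < logQuota L n R := Nat.sub_one_lt_floor _
  calc ((R - logQuota L n R : ℕ) : ℝ) + n = R - logQuota L n R + n := by
        rw [Nat.cast_sub (by omega)]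
    _ ≤ R - L * (1 + R / n) + n := by linarith
    _ = (R + n) * (1 - L / n) := by field_simp; ring
    _ ≤ (R + n) * 2 ^ (-(L / n)) := by
        gcongr
        exact one_sub_le_two_rpow_neg (by positivity)

lemma iterate_sub_logQuota_add_le (hn : 0 < n) (hL : 1 ≤ L) (m t : ℕ)
    (ht : 0 < (fun R => R - logQuota L n R)^[t] m) :
    (((fun R => R - logQuota L n R)^[t] m : ℕ) : ℝ) + n ≤ (m + n) * (2 ^ (-(L / n))) ^ t := by
  induction t with
  | zero => simp
  | succ t ih =>
    rw [Function.iterate_succ_apply'] at ht ⊢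
    refine (sub_logQuota_add_le hn hL ht).trans ?_
    rw [pow_succ, ← mul_assoc]
    gcongr
    exact ih (ht.trans_le (Nat.sub_le _ _))

lemma exhausts_logQuota (hn : 0 < n) {m : ℕ} (hnm : n ≤ m) :
    Exhausts (logQuota (1 + Real.logb 2 (m / n)) n) n m := by
  have hn' : (0 : ℝ) < n := Nat.cast_pos.2 hn
  have hnm' : (n : ℝ) ≤ m := Nat.cast_le.2 hnm
  have hm' : (0 : ℝ) < m := hn'.trans_le hnm'
  set L := 1 + Real.logb 2 ((m : ℝ) / n) with hLdef
  have hL : 1 ≤ L := by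
    have := Real.logb_nonneg one_lt_two ((one_le_div hn').2 hnm')
    linarith
  have hpow : ((2 : ℝ) ^ (-(L / n))) ^ n = n / (2 * m) := by
    rw [← Real.rpow_mul_natCast two_pos.le, neg_mul, div_mul_cancel₀ _ hn'.ne', hLdef,
      Real.rpow_neg two_pos.le, Real.rpow_add two_pos, Real.rpow_one,
      Real.rpow_logb two_pos one_lt_two.ne' (by positivity)]
    field_simp
  by_contra hne
  have hbound := iterate_sub_logQuota_add_le hn hL m n (Nat.pos_of_ne_zero hne)
  have hle : ((m : ℝ) + n) * (n / (2 * m)) ≤ n := by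
    rw [← mul_div_assoc, div_le_iff₀ (by positivity)]
    nlinarith
  have hpos : (0 : ℝ) < ((fun R => R - logQuota L n R)^[n] m : ℕ) :=
    Nat.cast_pos.2 (Nat.pos_of_ne_zero hne)
  rw [hpow] at hbound
  linarith

lemma IsCheapest.sum_le_three_mul {α : Type*} {c : α → ℝ} {S K : Finset α} {M : ℝ}
    (hK : IsCheapest c S (logQuota L n #S) K) (hn : 0 < n) (hL : 0 ≤ L) (hM : 0 ≤ M)
    (hmax : ∀ x ∈ K, c x ≤ M) (htotal : ∑ x ∈ S, c x ≤ n * M) :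
    ∑ x ∈ K, c x ≤ 3 * L * M := by
  have hn' : (0 : ℝ) < n := Nat.cast_pos.2 hn
  have hquota : (#K : ℝ) ≤ L * (2 + #S / n) :=
    (Nat.cast_le.2 (hK.card_eq.trans_le (min_le_left _ _))).trans (Nat.floor_le (by positivity))
  have hsize : ∑ x ∈ K, c x ≤ #K * M := by
    rw [← nsmul_eq_mul]
    exact sum_le_card_nsmul K c M hmax
  have haverage : #S / n * ∑ x ∈ K, c x ≤ #K * M := by
    rw [div_mul_eq_mul_div, div_le_iff₀ hn']
    calc #S * ∑ x ∈ K, c x ≤ #K * ∑ x ∈ S, c x := by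
          simpa only [nsmul_eq_mul] using hK.card_nsmul_sum_le
      _ ≤ #K * (n * M) := by gcongr
      _ = #K * M * n := by ring
  refine le_of_mul_le_mul_left (a := 2 + (#S : ℝ) / n) ?_ (by positivity)
  calc (2 + (#S : ℝ) / n) * ∑ x ∈ K, c x ≤ 3 * M * #K := by linarith
    _ ≤ 3 * M * (L * (2 + #S / n)) := by gcongr
    _ = (2 + #S / n) * (3 * L * M) := by ring

end Quota

theorem det_ordinal_sp_log_approx_general {n m : ℕ} (hn : 0 < n) (hnm : n ≤ m) :
    ∃ A : (Fin n → Fin m → ℝ) → Fin m → Fin n, IsOrdinal A ∧ IsStrategyproof A ∧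
      ∀ (c : Fin n → Fin m → ℝ) (i : Fin n), (∀ j, 0 ≤ c i j) →
        ∑ j with A c j = i, c i j ≤ 3 * (1 + Real.logb 2 (m / n)) * MMS n m (c i) := by
  have : NeZero n := ⟨hn.ne'⟩
  have hlog : 0 ≤ Real.logb 2 ((m : ℝ) / n) :=
    Real.logb_nonneg one_lt_two ((one_le_div (Nat.cast_pos.2 hn)).2 (Nat.cast_le.2 hnm))
  have hexhaust : Exhausts (logQuota (1 + Real.logb 2 (m / n)) n) n (Fintype.card (Fin m)) := by
    simpa only [Fintype.card_fin] using exhausts_logQuota hn hnm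
  refine ⟨sequentialPicking hexhaust, isOrdinal_sequentialPicking _,
    isStrategyproof_sequentialPicking _, fun c i hc => ?_⟩
  rw [filter_sequentialPicking]
  exact (isCheapest_bundle _ c i).sum_le_three_mul hn (by positivity) (MMS_nonneg hc)
    (fun j _ => cost_le_MMS hc j)
    ((sum_le_univ_sum_of_nonneg hc).trans sum_cost_le_mul_MMS)

/-- there is a universal constant `C` such that for all `n ≥ 2` and
`m > n` there is a deterministic allocation algorithm (mapping nonnegative cost
profiles to allocations `Fin m → Fin n`) that is ordinal, strategyproof, and
`C·(1 + log₂(m/n))`-approximately MMS fair. -/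
theorem det_ordinal_sp_log_approx :
    ∃ C : ℝ, 0 < C ∧
      ∀ n m : ℕ, 2 ≤ n → n < m →
        ∃ A : (Fin n → Fin m → ℝ) → (Fin m → Fin n),
          -- (i) ordinal: the output depends only on each agent's weak order by cost
          (∀ c c' : Fin n → Fin m → ℝ,
            (∀ (i : Fin n) (j j' : Fin m), c i j ≤ c i j' ↔ c' i j ≤ c' i j') →
            A c = A c') ∧
          -- (ii) strategyproof
          (∀ c : Fin n → Fin m → ℝ, (∀ i j, 0 ≤ c i j) →
            ∀ (i : Fin n) (c'i : Fin m → ℝ), (∀ j, 0 ≤ c'i j) →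
            ∑ j ∈ Finset.univ.filter (fun j => A c j = i), c i j ≤
              ∑ j ∈ Finset.univ.filter
                  (fun j => A (Function.update c i c'i) j = i), c i j) ∧
          -- (iii) C·(1 + log₂(m/n))-approximate MMS fairness
          (∀ c : Fin n → Fin m → ℝ, (∀ i j, 0 ≤ c i j) →
            ∀ i : Fin n,
              ∑ j ∈ Finset.univ.filter (fun j => A c j = i), c i j ≤
                C * (1 + Real.logb 2 ((m : ℝ) / (n : ℝ))) * MMS n m (c i)) := by
  refine ⟨3, three_pos, fun n m hn hnm => ?_⟩
  obtain ⟨A, hordinal, hsp, hfair⟩ := det_ordinal_sp_log_approx_general (two_pos.trans_le hn) hnm.le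
  exact ⟨A, hordinal, fun c _ i b _ => hsp c i b, fun c hc i => hfair c i (hc i)⟩
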